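/- arXiv:1505.07529 — 11 statements merged into one kernel-verified Lean document; each statement's English description precedes it below -/
import Mathlib

section
/- For every x ∈ ℝ, the new 6-point kernel satisfies the zeroth moment condition: ∑_{j∈ℤ} φ(x − j) = 1. -/
noncomputable section

namespace IB6

/-- The special second-moment constant `K = 59/60 − √29/20`. -/
def K : ℝ := 59 / 60 - Real.sqrt 29 / 20

/-- `α = 28`. -/
def a : ℝ := 28

/-- `β(r)`. -/
def b (r : ℝ) : ℝ :=
  9 / 4 - (3 / 2) * (K + r ^ 2) * r + (22 / 3 - 7 * K) * r - (7 / 3) * r ^ 3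

/-- `γ(r)`. -/
def c (r : ℝ) : ℝ :=
  -(11 / 32) * r ^ 2 + (3 / 32) * (2 * K + r ^ 2) * r ^ 2
    + (1 / 72) * ((3 * K - 1) * r + r ^ 3) ^ 2
    + (1 / 18) * ((4 - 3 * K) * r - r ^ 3) ^ 2

/-- `p₋₃(r) = (−β(r) + √(β(r)² − 4αγ(r)))/(2α)`. -/
def pm3 (r : ℝ) : ℝ := (-b r + Real.sqrt (b r ^ 2 - 4 * a * c r)) / (2 * a)

/-- `p₋₂(r)`. -/
def pm2 (r : ℝ) : ℝ :=
  -3 * pm3 r - 1 / 16 + (K + r ^ 2) / 8 + (3 * K - 1) * r / 12 + r ^ 3 / 12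

/-- `p₋₁(r)`. -/
def pm1 (r : ℝ) : ℝ := 2 * pm3 r + 1 / 4 + (4 - 3 * K) * r / 6 - r ^ 3 / 6

/-- `p₀(r)`. -/
def p0 (r : ℝ) : ℝ := 2 * pm3 r + 5 / 8 - (K + r ^ 2) / 4

/-- `p₁(r)`. -/
def p1 (r : ℝ) : ℝ := -3 * pm3 r + 1 / 4 - (4 - 3 * K) * r / 6 + r ^ 3 / 6

/-- `p₂(r)`. -/
def p2 (r : ℝ) : ℝ :=
  pm3 r - 1 / 16 + (K + r ^ 2) / 8 - (3 * K - 1) * r / 12 - r ^ 3 / 12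

/-- The new 6-point immersed-boundary kernel `φ`. -/
def phi (x : ℝ) : ℝ :=
  if -3 ≤ x ∧ x < -2 then pm3 (x - (-3))
  else if -2 ≤ x ∧ x < -1 then pm2 (x - (-2))
  else if -1 ≤ x ∧ x < 0 then pm1 (x - (-1))
  else if 0 ≤ x ∧ x < 1 then p0 (x - 0)
  else if 1 ≤ x ∧ x < 2 then p1 (x - 1)
  else if 2 ≤ x ∧ x < 3 then p2 (x - 2)
  else 0

/-- Zeroth moment condition: `∑_{j∈ℤ} φ(x − j) = 1` for all `x`. -/
theorem new6pt_zeroth_moment (x : ℝ) : ∑' j : ℤ, phi (x - j) = 1 := by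
  have h0 : 0 ≤ Int.fract x := Int.fract_nonneg x
  have h1 : Int.fract x < 1 := Int.fract_lt_one x
  have hx : (⌊x⌋ : ℝ) + Int.fract x = x := Int.floor_add_fract x
  generalize Int.fract x = r at h0 h1 hx
  generalize ⌊x⌋ = n at hx
  rw [← (Equiv.subLeft n).tsum_eq (fun j : ℤ => phi (x - j))]
  have key : ∀ k : ℤ, phi (x - ((Equiv.subLeft n k : ℤ) : ℝ)) = phi (r + k) := by
    intro k
    congr 1
    simp only [Equiv.subLeft_apply]
    push_cast
    linarith
  simp only [key]
  rw [tsum_eq_sum (s := {-3, -2, -1, 0, 1, 2})]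
  · have e1 : phi (r + ((-3 : ℤ) : ℝ)) = pm3 r := by
      unfold phi
      push_cast
      rw [if_pos (by constructor <;> linarith)]
      congr 1; ring
    have e2 : phi (r + ((-2 : ℤ) : ℝ)) = pm2 r := by
      unfold phi
      push_cast
      rw [if_neg (by rintro ⟨_, _⟩; linarith), if_pos (by constructor <;> linarith)]
      congr 1; ring
    have e3 : phi (r + ((-1 : ℤ) : ℝ)) = pm1 r := by
      unfold phi
      push_cast
      rw [if_neg (by rintro ⟨_, _⟩; linarith), if_neg (by rintro ⟨_, _⟩; linarith),
        if_pos (by constructor <;> linarith)]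
      congr 1; ring
    have e4 : phi (r + ((0 : ℤ) : ℝ)) = p0 r := by
      unfold phi
      push_cast
      rw [if_neg (by rintro ⟨_, _⟩; linarith), if_neg (by rintro ⟨_, _⟩; linarith),
        if_neg (by rintro ⟨_, _⟩; linarith), if_pos (by constructor <;> linarith)]
      congr 1; ring
    have e5 : phi (r + ((1 : ℤ) : ℝ)) = p1 r := by
      unfold phi
      push_cast
      rw [if_neg (by rintro ⟨_, _⟩; linarith), if_neg (by rintro ⟨_, _⟩; linarith),
        if_neg (by rintro ⟨_, _⟩; linarith), if_neg (by rintro ⟨_, _⟩; linarith),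
        if_pos (by constructor <;> linarith)]
      congr 1; ring
    have e6 : phi (r + ((2 : ℤ) : ℝ)) = p2 r := by
      unfold phi
      push_cast
      rw [if_neg (by rintro ⟨_, _⟩; linarith), if_neg (by rintro ⟨_, _⟩; linarith),
        if_neg (by rintro ⟨_, _⟩; linarith), if_neg (by rintro ⟨_, _⟩; linarith),
        if_neg (by rintro ⟨_, _⟩; linarith), if_pos (by constructor <;> linarith)]
      congr 1; ring
    rw [Finset.sum_insert (by decide), Finset.sum_insert (by decide),
      Finset.sum_insert (by decide), Finset.sum_insert (by decide),
      Finset.sum_insert (by decide), Finset.sum_singleton, e1, e2, e3, e4, e5, e6]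
    unfold pm2 pm1 p0 p1 p2
    ring
  · intro k hk
    have hk' : k ≤ -4 ∨ 3 ≤ k := by
      simp only [Finset.mem_insert, Finset.mem_singleton] at hk
      omega
    unfold phi
    rcases hk' with h | h
    · have h' : (k : ℝ) ≤ -4 := by exact_mod_cast h
      repeat rw [if_neg (by rintro ⟨_, _⟩; linarith)]
    · have h' : (3 : ℝ) ≤ k := by exact_mod_cast h
      repeat rw [if_neg (by rintro ⟨_, _⟩; linarith)]

end IB6
end
end

section
/- For every x ∈ ℝ, the new 6-point kernel satisfies the even–odd condition: ∑_{j∈ℤ, j even} φ(x − j) = 1/2 and ∑_{j∈ℤ, j odd} φ(x − j) = 1/2. -/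
noncomputable section

namespace IB6

theorem phi_zero (r : ℝ) (h0 : 0 ≤ r) (h1 : r < 1) (k : ℤ)
    (hk : k ∉ ({-3, -2, -1, 0, 1, 2} : Finset ℤ)) : phi (r + k) = 0 := by
  have h : k ≤ -4 ∨ 3 ≤ k := by
    simp only [Finset.mem_insert, Finset.mem_singleton] at hk
    omega
  unfold phi
  rcases h with h | h
  · have h' : (k : ℝ) ≤ -4 := by exact_mod_cast h
    repeat rw [if_neg (by rintro ⟨h2, h3⟩; linarith)]
  · have h' : (3 : ℝ) ≤ k := by exact_mod_cast h
    repeat rw [if_neg (by rintro ⟨h2, h3⟩; linarith)]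

theorem sum_aux (P : ℤ → Prop) [DecidablePred P] (x : ℝ) :
    (∑' j : ℤ, if P j then phi (x - j) else 0) =
      (if P (⌊x⌋ + 3) then pm3 (Int.fract x) else 0) +
      ((if P (⌊x⌋ + 2) then pm2 (Int.fract x) else 0) +
      ((if P (⌊x⌋ + 1) then pm1 (Int.fract x) else 0) +
      ((if P ⌊x⌋ then p0 (Int.fract x) else 0) +
      ((if P (⌊x⌋ - 1) then p1 (Int.fract x) else 0) +
      (if P (⌊x⌋ - 2) then p2 (Int.fract x) else 0))))) := by
  have h0 := Int.fract_nonneg x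
  have h1 := Int.fract_lt_one x
  rw [← (Equiv.subLeft ⌊x⌋).tsum_eq]
  have e : ∀ k : ℤ, x - (((Equiv.subLeft ⌊x⌋) k : ℤ) : ℝ) = Int.fract x + k := by
    intro k
    simp only [Equiv.subLeft_apply, Int.cast_sub, Int.fract]
    ring
  simp only [e]
  rw [tsum_eq_sum (s := ({-3, -2, -1, 0, 1, 2} : Finset ℤ))
    (fun k hk => by rw [phi_zero _ h0 h1 k hk, ite_self])]
  generalize Int.fract x = r at *
  have q1 : phi (r + ((-3 : ℤ) : ℝ)) = pm3 r := by
    push_cast; unfold phi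
    rw [if_pos ⟨by linarith, by linarith⟩]; congr 1; ring
  have q2 : phi (r + ((-2 : ℤ) : ℝ)) = pm2 r := by
    push_cast; unfold phi
    repeat rw [if_neg (by rintro ⟨h2, h3⟩; linarith)]
    rw [if_pos ⟨by linarith, by linarith⟩]; congr 1; ring
  have q3 : phi (r + ((-1 : ℤ) : ℝ)) = pm1 r := by
    push_cast; unfold phi
    repeat rw [if_neg (by rintro ⟨h2, h3⟩; linarith)]
    rw [if_pos ⟨by linarith, by linarith⟩]; congr 1; ring
  have q4 : phi (r + ((0 : ℤ) : ℝ)) = p0 r := by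
    push_cast; unfold phi
    repeat rw [if_neg (by rintro ⟨h2, h3⟩; linarith)]
    rw [if_pos ⟨by linarith, by linarith⟩]; congr 1; ring
  have q5 : phi (r + ((1 : ℤ) : ℝ)) = p1 r := by
    push_cast; unfold phi
    repeat rw [if_neg (by rintro ⟨h2, h3⟩; linarith)]
    rw [if_pos ⟨by linarith, by linarith⟩]; congr 1; ring
  have q6 : phi (r + ((2 : ℤ) : ℝ)) = p2 r := by
    push_cast; unfold phi
    repeat rw [if_neg (by rintro ⟨h2, h3⟩; linarith)]
    rw [if_pos ⟨by linarith, by linarith⟩]; congr 1; ring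
  rw [Finset.sum_insert (by decide), Finset.sum_insert (by decide), Finset.sum_insert (by decide),
    Finset.sum_insert (by decide), Finset.sum_insert (by decide), Finset.sum_singleton,
    q1, q2, q3, q4, q5, q6]
  simp only [Equiv.subLeft_apply, sub_neg_eq_add, sub_zero]

theorem sumA (r : ℝ) : pm3 r + pm1 r + p1 r = 1 / 2 := by
  unfold pm1 p1; ring

theorem sumB (r : ℝ) : pm2 r + p0 r + p2 r = 1 / 2 := by
  unfold pm2 p0 p2; ring

/-- Even–odd condition: the sums of `φ(x − j)` over even `j` and over odd `j`
are each equal to `1/2`, for every `x`. -/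
theorem new6pt_even_odd (x : ℝ) :
    (∑' j : ℤ, if Even j then phi (x - j) else 0) = 1 / 2 ∧
    (∑' j : ℤ, if Odd j then phi (x - j) else 0) = 1 / 2 := by
  have hA := sumA (Int.fract x)
  have hB := sumB (Int.fract x)
  rw [sum_aux, sum_aux]
  have t3 : ¬ Even (3 : ℤ) := by decide
  have t2 : Even (2 : ℤ) := by decide
  rcases Int.even_or_odd ⌊x⌋ with h | h
  · have h' : ¬ Odd ⌊x⌋ := Int.not_odd_iff_even.mpr h
    constructor <;> simp [← Int.not_even_iff_odd, Int.even_add, Int.even_sub, h, t3] <;> linarith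
  · have h' : ¬ Even ⌊x⌋ := Int.not_even_iff_odd.mpr h
    constructor <;> simp [← Int.not_even_iff_odd, Int.even_add, Int.even_sub, h', t3] <;> linarith

end IB6
end
end

section
/- For every x ∈ ℝ, the new 6-point kernel satisfies the first moment condition: ∑_{j∈ℤ} (x − j)·φ(x − j) = 0. -/
noncomputable section

namespace IB6

/-- First moment condition: `∑_{j∈ℤ} (x − j)·φ(x − j) = 0` for all `x`. -/
theorem new6pt_first_moment (x : ℝ) : ∑' j : ℤ, (x - j) * phi (x - j) = 0 := by 
  have h0 : 0 ≤ x - (⌊x⌋ : ℝ) := sub_nonneg.2 (Int.floor_le x)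
  have h1 : x - (⌊x⌋ : ℝ) < 1 := by linarith [Int.lt_floor_add_one x]
  rw [← (Equiv.addLeft ⌊x⌋).tsum_eq (fun j : ℤ => (x - j) * phi (x - j))]
  generalize hr : x - (⌊x⌋ : ℝ) = r at h0 h1
  have key : ∀ j : ℤ, (x - ((Equiv.addLeft ⌊x⌋ j : ℤ) : ℝ)) = r - j := by
    intro j
    simp only [Equiv.coe_addLeft]
    push_cast
    linarith
  simp only [key]
  rw [tsum_eq_sum (s := Finset.Icc (-2 : ℤ) 3)]
  · have hs : Finset.Icc (-2 : ℤ) 3 = {-2, -1, 0, 1, 2, 3} := by decide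
    have e1 : phi (r - 3) = pm3 r := by
      unfold phi
      rw [if_pos (by constructor <;> linarith)]
      congr 1; ring
    have e2 : phi (r - 2) = pm2 r := by
      unfold phi
      rw [if_neg (by rintro ⟨_, _⟩; linarith), if_pos (by constructor <;> linarith)]
      congr 1; ring
    have e3 : phi (r - 1) = pm1 r := by
      unfold phi
      rw [if_neg (by rintro ⟨_, _⟩; linarith), if_neg (by rintro ⟨_, _⟩; linarith),
        if_pos (by constructor <;> linarith)]
      congr 1; ring
    have e4 : phi r = p0 r := by
      unfold phi
      rw [if_neg (by rintro ⟨_, _⟩; linarith), if_neg (by rintro ⟨_, _⟩; linarith),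
        if_neg (by rintro ⟨_, _⟩; linarith), if_pos (by constructor <;> linarith)]
      congr 1; ring
    have e5 : phi (r + 1) = p1 r := by
      unfold phi
      rw [if_neg (by rintro ⟨_, _⟩; linarith), if_neg (by rintro ⟨_, _⟩; linarith),
        if_neg (by rintro ⟨_, _⟩; linarith), if_neg (by rintro ⟨_, _⟩; linarith),
        if_pos (by constructor <;> linarith)]
      congr 1; ring
    have e6 : phi (r + 2) = p2 r := by
      unfold phi
      rw [if_neg (by rintro ⟨_, _⟩; linarith), if_neg (by rintro ⟨_, _⟩; linarith),
        if_neg (by rintro ⟨_, _⟩; linarith), if_neg (by rintro ⟨_, _⟩; linarith),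
        if_neg (by rintro ⟨_, _⟩; linarith), if_pos (by constructor <;> linarith)]
      congr 1; ring
    rw [hs]
    simp [e1, e2, e3, e4, e5, e6]
    unfold pm2 pm1 p0 p1 p2
    ring
  · intro j hj
    have hj2 : j ≤ -3 ∨ 4 ≤ j := by
      rw [Finset.mem_Icc] at hj
      omega
    have hz : phi (r - j) = 0 := by
      rcases hj2 with h | h
      · have h' : (j : ℝ) ≤ -3 := by exact_mod_cast h
        unfold phi
        repeat rw [if_neg (by rintro ⟨_, _⟩; linarith)]
      · have h' : (4 : ℝ) ≤ j := by exact_mod_cast h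
        unfold phi
        repeat rw [if_neg (by rintro ⟨_, _⟩; linarith)]
    rw [hz, mul_zero]

end IB6
end
end

section
/- For every x ∈ ℝ, the new 6-point kernel satisfies the second moment condition with constant K: ∑_{j∈ℤ} (x − j)²·φ(x − j) = 59/60 − √29/20. -/
noncomputable section

namespace IB6

/-- Second moment condition with constant `K = 59/60 − √29/20`. -/
theorem new6pt_second_moment (x : ℝ) :
    ∑' j : ℤ, (x - j) ^ 2 * phi (x - j) = 59 / 60 - Real.sqrt 29 / 20 := by 
  have h0 := Int.fract_nonneg x
  have h1 := Int.fract_lt_one x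
  rw [← (Equiv.subLeft ⌊x⌋).tsum_eq]
  have key : ∀ k : ℤ, x - (((Equiv.subLeft ⌊x⌋) k : ℤ) : ℝ) = Int.fract x + k := by
    intro k
    rw [Equiv.subLeft_apply, Int.cast_sub, Int.fract]
    ring
  simp only [key]
  generalize Int.fract x = r at h0 h1
  rw [tsum_eq_sum (s := Finset.Ico (-3 : ℤ) 3)]
  · have e : Finset.Ico (-3 : ℤ) 3 = {-3, -2, -1, 0, 1, 2} := by decide
    have a1 : phi (r + (-3)) = pm3 r := by
      unfold phi
      rw [if_pos (by constructor <;> linarith)]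
      congr 1; ring
    have a2 : phi (r + (-2)) = pm2 r := by
      unfold phi
      rw [if_neg (by intro h; linarith [h.1, h.2]), if_pos (by constructor <;> linarith)]
      congr 1; ring
    have a3 : phi (r + (-1)) = pm1 r := by
      unfold phi
      rw [if_neg (by intro h; linarith [h.1, h.2]), if_neg (by intro h; linarith [h.1, h.2]),
        if_pos (by constructor <;> linarith)]
      congr 1; ring
    have a4 : phi (r + 0) = p0 r := by
      unfold phi
      rw [if_neg (by intro h; linarith [h.1, h.2]), if_neg (by intro h; linarith [h.1, h.2]),
        if_neg (by intro h; linarith [h.1, h.2]), if_pos (by constructor <;> linarith)]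
      congr 1; ring
    have a5 : phi (r + 1) = p1 r := by
      unfold phi
      rw [if_neg (by intro h; linarith [h.1, h.2]), if_neg (by intro h; linarith [h.1, h.2]),
        if_neg (by intro h; linarith [h.1, h.2]), if_neg (by intro h; linarith [h.1, h.2]),
        if_pos (by constructor <;> linarith)]
      congr 1; ring
    have a6 : phi (r + 2) = p2 r := by
      unfold phi
      rw [if_neg (by intro h; linarith [h.1, h.2]), if_neg (by intro h; linarith [h.1, h.2]),
        if_neg (by intro h; linarith [h.1, h.2]), if_neg (by intro h; linarith [h.1, h.2]),
        if_neg (by intro h; linarith [h.1, h.2]), if_pos (by constructor <;> linarith)]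
      congr 1; ring
    rw [e, Finset.sum_insert (by decide), Finset.sum_insert (by decide),
      Finset.sum_insert (by decide), Finset.sum_insert (by decide),
      Finset.sum_insert (by decide), Finset.sum_singleton]
    push_cast
    rw [a1, a2, a3, a4, a5, a6]
    have hK : (59 / 60 - Real.sqrt 29 / 20 : ℝ) = K := rfl
    rw [hK]
    unfold pm2 pm1 p0 p1 p2
    ring
  · intro k hk
    have hk' : k ≤ -4 ∨ 3 ≤ k := by
      rw [Finset.mem_Ico] at hk
      omega
    have hz : phi (r + k) = 0 := by
      unfold phi
      rcases hk' with h | h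
      · have h' : (k : ℝ) ≤ -4 := by exact_mod_cast h
        repeat rw [if_neg (by intro h; linarith [h.1, h.2])]
      · have h' : (3 : ℝ) ≤ k := by exact_mod_cast h
        repeat rw [if_neg (by intro h; linarith [h.1, h.2])]
    rw [hz, mul_zero]

end IB6
end
end

section
/- For every x ∈ ℝ, the new 6-point kernel satisfies the third moment condition: ∑_{j∈ℤ} (x − j)³·φ(x − j) = 0. -/
noncomputable section

namespace IB6

theorem phi_eq (r y : ℝ) (k : ℤ) (h0 : 0 ≤ r) (h1 : r < 1) (hy : y = r + k) :
    phi y = if k = -3 then pm3 r else if k = -2 then pm2 r else if k = -1 then pm1 r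
      else if k = 0 then p0 r else if k = 1 then p1 r else if k = 2 then p2 r else 0 := by
  have key : ∀ m : ℤ, ((m : ℝ) ≤ y ∧ y < (m : ℝ) + 1) ↔ k = m := by
    intro m
    subst hy
    constructor
    · rintro ⟨h2, h3⟩
      have h4 : (m : ℝ) < ((k + 1 : ℤ) : ℝ) := by push_cast; linarith
      have h5 : (k : ℝ) < ((m + 1 : ℤ) : ℝ) := by push_cast; linarith
      have h6 := Int.cast_lt.mp h4
      have h7 := Int.cast_lt.mp h5
      omega
    · rintro rfl
      constructor <;> linarith
  have e3 := key (-3)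
  have e2 := key (-2)
  have e1 := key (-1)
  have e0 := key 0
  have f1 := key 1
  have f2 := key 2
  norm_num at e3 e2 e1 e0 f1 f2
  unfold phi
  simp only [e3, e2, e1, e0, f1, f2]
  subst hy
  split_ifs <;> first | rfl | (subst_vars; congr 1; push_cast; ring)

/-- Third moment condition: `∑_{j∈ℤ} (x − j)³·φ(x − j) = 0` for all `x`. -/
theorem new6pt_third_moment (x : ℝ) : ∑' j : ℤ, (x - j) ^ 3 * phi (x - j) = 0 := by
  have h0 := Int.fract_nonneg x
  have h1 := Int.fract_lt_one x
  have hx : ∀ k : ℤ, x - ((⌊x⌋ - k : ℤ) : ℝ) = Int.fract x + k := by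
    intro k
    have := Int.self_sub_floor x
    push_cast
    linarith
  generalize Int.fract x = r at h0 h1 hx
  rw [← (Equiv.subLeft ⌊x⌋).tsum_eq]
  simp only [Equiv.subLeft_apply, hx]
  have hp := fun k : ℤ => phi_eq r (r + k) k h0 h1 rfl
  simp only [hp]
  rw [tsum_eq_sum (s := {-3, -2, -1, 0, 1, 2})]
  · norm_num
    unfold pm2 pm1 p0 p1 p2
    ring
  · intro k hk
    simp only [Finset.mem_insert, Finset.mem_singleton, not_or] at hk
    simp [hk]

end IB6
end
end

section
/- The discriminant appearing in the definition of the new 6-point kernel is non-negative: for every r ∈ [0,1], β(r)² − 4·α·γ(r) ≥ 0, where α = 28; hence the quadratic equation α·z² + β(r)·z + γ(r) = 0 has a real root and p₋₃(r) is a genuine (real) root of it. -/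
noncomputable section

namespace IB6

theorem K_quad : (45 / 72) * K ^ 2 + (3 / 16 - 102 / 72) * K + (65 / 72 - 11 / 32) = 0 := by
  have h : Real.sqrt 29 ^ 2 = 29 := Real.sq_sqrt (by norm_num)
  unfold K
  linear_combination (1 / 640) * h

theorem K_le : K ≤ 18 / 25 := by
  have h : (5.3 : ℝ) ≤ Real.sqrt 29 := Real.le_sqrt_of_sq_le (by norm_num)
  unfold K
  linarith

theorem c_nonpos (r : ℝ) (h0 : 0 ≤ r) (h1 : r ≤ 1) : c r ≤ 0 := by
  have e : c r = r ^ 4 * (3 / 32 - 17 / 36 + 15 * K / 36 + 5 / 72 * r ^ 2) := by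
    unfold c
    linear_combination r ^ 2 * K_quad
  rw [e]
  apply mul_nonpos_of_nonneg_of_nonpos (by positivity)
  have := K_le
  nlinarith

/-- For every `r ∈ [0,1]` the discriminant `β(r)² − 4αγ(r)` is non-negative; hence
the quadratic `α z² + β(r) z + γ(r) = 0` has a real root, and `p₋₃(r)` is such a root. -/
theorem new6pt_discriminant_nonneg (r : ℝ) (hr : r ∈ Set.Icc (0 : ℝ) 1) :
    0 ≤ b r ^ 2 - 4 * a * c r ∧ a * (pm3 r) ^ 2 + b r * pm3 r + c r = 0 := by
  have hc := c_nonpos r hr.1 hr.2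
  have hd : 0 ≤ b r ^ 2 - 4 * a * c r := by
    have : a = 28 := rfl
    rw [this]
    nlinarith [sq_nonneg (b r)]
  refine ⟨hd, ?_⟩
  have hs := Real.sq_sqrt hd
  have ha : a = 28 := rfl
  unfold pm3
  rw [ha] at hs ⊢
  linear_combination (1 / 112) * hs

end IB6
end
end

section
/- Exact grid translational invariance is inconsistent with compact support: if φ : ℝ → ℝ is continuous with compact support and there exists a function Φ : ℝ → ℝ such that ∑_{j∈ℤ} φ(r₁ − j)·φ(r₂ − j) = Φ(r₁ − r₂) for all r₁, r₂ ∈ ℝ, then φ is identically zero. -/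
/-- Exact grid translational invariance is inconsistent with compact support: if `φ` is
continuous with compact support and the coupling sum `∑_{j∈ℤ} φ(r₁ − j)·φ(r₂ − j)`
depends only on `r₁ − r₂`, then `φ` is identically zero. -/
theorem exact_translation_invariance_impossible
    (φ : ℝ → ℝ) (hcont : Continuous φ) (hsupp : HasCompactSupport φ)
    (Φ : ℝ → ℝ)
    (hinv : ∀ r₁ r₂ : ℝ, ∑' j : ℤ, φ (r₁ - j) * φ (r₂ - j) = Φ (r₁ - r₂)) :
    ∀ x : ℝ, φ x = 0 := by
  by_contra! hne
  have hS : (Function.support φ).Nonempty := hne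
  have hbdd : Bornology.IsBounded (Function.support φ) :=
    hsupp.isCompact.isBounded.subset (subset_tsupport φ)
  have hbb := hbdd.bddBelow
  have hba := hbdd.bddAbove
  obtain ⟨x, hx, hxa⟩ := exists_lt_of_csInf_lt hS
    (show sInf (Function.support φ) < sInf (Function.support φ) + 1/2 by linarith)
  obtain ⟨y, hy, hyb⟩ := exists_lt_of_lt_csSup hS
    (show sSup (Function.support φ) - 1/2 < sSup (Function.support φ) by linarith)
  have ha : ∀ z, z < sInf (Function.support φ) → φ z = 0 := fun z hz => by
    by_contra h
    exact absurd (csInf_le hbb (show z ∈ Function.support φ from h)) (not_le.2 hz)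
  have hb : ∀ z, sSup (Function.support φ) < z → φ z = 0 := fun z hz => by
    by_contra h
    exact absurd (le_csSup hba (show z ∈ Function.support φ from h)) (not_le.2 hz)
  generalize sInf (Function.support φ) = a at *
  generalize sSup (Function.support φ) = b at *
  have h1 : Φ (x - y) = φ x * φ y := by
    rw [← hinv x y, tsum_eq_single 0]
    · simp
    · intro j hj
      rcases lt_or_gt_of_ne hj with h | h
      · have : (j : ℝ) ≤ -1 := by exact_mod_cast (by omega : j ≤ -1)
        rw [hb (y - j) (by linarith), mul_zero]
      · have : (1 : ℝ) ≤ j := by exact_mod_cast (by omega : 1 ≤ j)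
        rw [ha (x - j) (by linarith), zero_mul]
  obtain ⟨e, he0, he⟩ := exists_between (show (0 : ℝ) < 1 + (y - x) + a - b by linarith)
  have h2 : Φ (x - y) = 0 := by
    have h := hinv (a - e) (a - e + (y - x))
    rw [show a - e - (a - e + (y - x)) = x - y by ring] at h
    rw [← h]
    refine (tsum_congr fun j => ?_).trans tsum_zero
    rcases lt_or_ge j 0 with h | h
    · have : (j : ℝ) ≤ -1 := by exact_mod_cast (by omega : j ≤ -1)
      rw [hb (a - e + (y - x) - j) (by linarith), mul_zero]
    · have : (0 : ℝ) ≤ j := by exact_mod_cast h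
      rw [ha (a - e - j) (by linarith), zero_mul]
  exact mul_ne_zero hx hy (h1.symm.trans h2)
end

section
/- A compactly supported, bounded kernel satisfying the zeroth and first moment conditions interpolates smooth functions with second-order accuracy: there exists a constant C₀ (depending only on φ and its support radius r_s) such that for every twice continuously differentiable f : ℝ → ℝ with |f''(y)| ≤ M for all y, every meshwidth h > 0, and every x ∈ ℝ, one has |∑_{j∈ℤ} φ(x/h − j)·f(j·h) − f(x)| ≤ C₀·M·h². -/
lemma taylor_aux (f : ℝ → ℝ) (hf : ContDiff ℝ 2 f) (M : ℝ)
    (hM : ∀ y : ℝ, |deriv (deriv f) y| ≤ M) (x y : ℝ) :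
    |f y - f x - deriv f x * (y - x)| ≤ M * (y - x) ^ 2 := by
  have hd : Differentiable ℝ f := hf.differentiable (by norm_num)
  have hf' : ContDiff ℝ 1 (deriv f) := ((contDiff_succ_iff_deriv (n := 1)).1 (by simpa [one_add_one_eq_two] using hf)).2.2
  have hd' : Differentiable ℝ (deriv f) := hf'.differentiable (by norm_num)
  have hM0 : 0 ≤ M := (abs_nonneg _).trans (hM 0)
  have lip : ∀ z, |deriv f z - deriv f x| ≤ M * |z - x| := fun z =>
    Convex.norm_image_sub_le_of_norm_deriv_le (s := Set.univ) (fun w _ => hd' w)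
      (fun w _ => hM w) convex_univ (Set.mem_univ x) (Set.mem_univ z)
  have hg : ∀ w, HasDerivAt (fun t => f t - deriv f x * t) (deriv f w - deriv f x) w := fun w => by
    have h2 := (hd w).hasDerivAt.sub ((hasDerivAt_id w).const_mul (deriv f x))
    rw [mul_one] at h2
    exact h2
  have key := Convex.norm_image_sub_le_of_norm_deriv_le (s := Set.uIcc x y)
    (f := fun t => f t - deriv f x * t) (C := M * |y - x|) (fun w _ => (hg w).differentiableAt)
    (fun w hw => by
      rw [(hg w).deriv]
      exact (lip w).trans (mul_le_mul_of_nonneg_left (Set.abs_sub_left_of_mem_uIcc hw) hM0))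
    (convex_uIcc x y) Set.left_mem_uIcc Set.right_mem_uIcc
  simp only [Real.norm_eq_abs] at key
  calc _ = |f y - deriv f x * y - (f x - deriv f x * x)| := by congr 1; ring
    _ ≤ _ := key
    _ = _ := by rw [mul_assoc, ← sq, sq_abs]

/-- A compactly supported, bounded kernel satisfying the zeroth and first moment
conditions interpolates smooth functions with second-order accuracy: there is a constant
`C₀` (depending only on `φ` and `rs`) such that for every `C²` function `f` with second
derivative bounded by `M`, every meshwidth `h > 0` and every point `x`,
`|∑_{j∈ℤ} φ(x/h − j)·f(j·h) − f(x)| ≤ C₀·M·h²`. -/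
theorem second_order_interpolation_accuracy
    (φ : ℝ → ℝ) (rs : ℝ) (hrs : 0 < rs) (hsupp : ∀ x : ℝ, rs ≤ |x| → φ x = 0)
    (B : ℝ) (hbdd : ∀ x : ℝ, |φ x| ≤ B)
    (h0 : ∀ r : ℝ, ∑' j : ℤ, φ (r - j) = 1)
    (h1 : ∀ r : ℝ, ∑' j : ℤ, (r - j) * φ (r - j) = 0) :
    ∃ C₀ : ℝ, ∀ (f : ℝ → ℝ), ContDiff ℝ 2 f →
      ∀ M : ℝ, (∀ y : ℝ, |deriv (deriv f) y| ≤ M) →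
      ∀ h : ℝ, 0 < h → ∀ x : ℝ,
        |(∑' j : ℤ, φ (x / h - j) * f (j * h)) - f x| ≤ C₀ * M * h ^ 2 := by 
  have hB : 0 ≤ B := (abs_nonneg _).trans (hbdd 0)
  refine ⟨(2 * rs + 1) * (B * rs ^ 2), fun f hf M hM h hh x => ?_⟩
  have hM0 : 0 ≤ M := (abs_nonneg _).trans (hM 0)
  obtain ⟨r, rfl⟩ : ∃ r, x = r * h := ⟨x / h, by field_simp⟩
  rw [mul_div_cancel_right₀ _ hh.ne']
  set S : Finset ℤ := Finset.Icc ⌈r - rs⌉ ⌊r + rs⌋ with hS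
  have hz : ∀ j ∉ S, φ (r - j) = 0 := by
    intro j hj
    apply hsupp
    by_contra hc
    rw [not_le, abs_lt] at hc
    apply hj
    rw [hS, Finset.mem_Icc, Int.ceil_le, Int.le_floor]
    constructor <;> linarith [hc.1, hc.2]
  have e0 := h0 r
  have e1 := h1 r
  rw [tsum_eq_sum (s := S) (fun j hj => hz j hj)] at e0
  rw [tsum_eq_sum (s := S) (fun j hj => by rw [hz j hj, mul_zero])] at e1
  rw [tsum_eq_sum (s := S) (fun j hj => by rw [hz j hj, zero_mul])]
  have hcard : (S.card : ℝ) ≤ 2 * rs + 1 := by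
    rw [hS, Int.card_Icc]
    have h2 : (⌊r + rs⌋ : ℝ) ≤ r + rs := Int.floor_le _
    have h3 : r - rs ≤ ⌈r - rs⌉ := Int.le_ceil _
    rcases le_total 0 (⌊r + rs⌋ + 1 - ⌈r - rs⌉) with h4 | h4
    · have : (((⌊r + rs⌋ + 1 - ⌈r - rs⌉).toNat : ℤ) : ℝ) = ((⌊r + rs⌋ + 1 - ⌈r - rs⌉ : ℤ) : ℝ) := by
        rw [Int.toNat_of_nonneg h4]
      rw [Int.cast_natCast] at this
      rw [this]
      push_cast
      linarith
    · rw [Int.toNat_of_nonpos h4]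
      push_cast
      linarith
  have eq : (∑ j ∈ S, φ (r - j) * f (j * h)) - f (r * h) =
      ∑ j ∈ S, φ (r - j) * (f (j * h) - f (r * h) - deriv f (r * h) * (j * h - r * h)) := by
    have : ∀ j ∈ S, φ (r - j) * (f (j * h) - f (r * h) - deriv f (r * h) * (j * h - r * h)) =
        φ (r - j) * f (j * h) - φ (r - j) * f (r * h)
          + (r - j) * φ (r - j) * (deriv f (r * h) * h) := fun j _ => by ring
    rw [Finset.sum_congr rfl this, Finset.sum_add_distrib, Finset.sum_sub_distrib,
      ← Finset.sum_mul, ← Finset.sum_mul, e0, e1]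
    ring
  rw [eq]
  have hterm : ∀ j ∈ S, |φ (r - j) * (f (j * h) - f (r * h) - deriv f (r * h) * (j * h - r * h))|
      ≤ B * rs ^ 2 * (M * h ^ 2) := by
    intro j hj
    rw [hS, Finset.mem_Icc, Int.ceil_le, Int.le_floor] at hj
    have hsq : ((j : ℝ) - r) ^ 2 ≤ rs ^ 2 := sq_le_sq' (by linarith [hj.1]) (by linarith [hj.2])
    rw [abs_mul]
    calc _ ≤ B * (M * (j * h - r * h) ^ 2) :=
          mul_le_mul (hbdd _) (taylor_aux f hf M hM _ _) (abs_nonneg _) hB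
      _ = B * (M * (((j : ℝ) - r) ^ 2 * h ^ 2)) := by ring
      _ ≤ B * (M * (rs ^ 2 * h ^ 2)) := by gcongr
      _ = _ := by ring
  calc _ ≤ _ := Finset.abs_sum_le_sum_abs _ _
    _ ≤ _ := Finset.sum_le_card_nsmul _ _ _ hterm
    _ = S.card * (B * rs ^ 2 * (M * h ^ 2)) := by rw [nsmul_eq_mul]
    _ ≤ (2 * rs + 1) * (B * rs ^ 2 * (M * h ^ 2)) := by gcongr
    _ = _ := by ring
end

section
/- The standard 4-point IB kernel satisfies the sum-of-squares condition with constant 3/8: for every x ∈ ℝ, ∑_{j∈ℤ} φ₄(x − j)² = 3/8. -/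
noncomputable section

/-- The standard 4-point immersed-boundary kernel. -/
def phi4 (r : ℝ) : ℝ :=
  if |r| ≤ 1 then (3 - 2 * |r| + Real.sqrt (1 + 4 * |r| - 4 * r ^ 2)) / 8
  else if |r| < 2 then (5 - 2 * |r| - Real.sqrt (-7 + 12 * |r| - 4 * r ^ 2)) / 8
  else 0

theorem phi4_zero (r : ℝ) (h : 2 ≤ |r|) : phi4 r = 0 := by
  unfold phi4
  rw [if_neg (by linarith), if_neg (by linarith)]

theorem phi4_inner (r a : ℝ) (h : |r| = a) (h1 : a ≤ 1) :
    phi4 r = (3 - 2 * a + Real.sqrt (1 + 4 * a - 4 * a ^ 2)) / 8 := by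
  unfold phi4
  rw [if_pos (by linarith), ← sq_abs r, h]

theorem phi4_outer (r a : ℝ) (h : |r| = a) (h1 : 1 ≤ a) (h2 : a ≤ 2) :
    phi4 r = (5 - 2 * a - Real.sqrt (-7 + 12 * a - 4 * a ^ 2)) / 8 := by
  rcases h1.eq_or_lt with h1 | h1
  · rw [phi4_inner r a h h1.symm.le, ← h1]
    norm_num
  · rcases h2.eq_or_lt with h2 | h2
    · rw [phi4_zero r (by linarith), h2]
      norm_num
    · unfold phi4
      rw [if_neg (by linarith), if_pos (by linarith), ← sq_abs r, h]

/-- The standard 4-point kernel satisfies the sum-of-squares condition with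
constant `3/8`. -/
theorem phi4_sum_of_squares (x : ℝ) : ∑' j : ℤ, (phi4 (x - j)) ^ 2 = 3 / 8 := by
  obtain ⟨n, f, hf0, hf1, rfl⟩ : ∃ (n : ℤ) (f : ℝ), 0 ≤ f ∧ f < 1 ∧ x = n + f :=
    ⟨⌊x⌋, Int.fract x, Int.fract_nonneg x, Int.fract_lt_one x, (Int.floor_add_fract x).symm⟩
  rw [← (Equiv.addLeft n).tsum_eq]
  rw [tsum_eq_sum (s := ({-1, 0, 1, 2} : Finset ℤ))]
  · rw [Finset.sum_insert (by decide), Finset.sum_insert (by decide),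
      Finset.sum_insert (by decide), Finset.sum_singleton]
    simp only [Equiv.coe_addLeft]
    push_cast
    rw [phi4_outer _ (1 + f) (by rw [abs_of_nonneg] <;> linarith) (by linarith) (by linarith),
      phi4_inner _ f (by rw [abs_of_nonneg] <;> linarith) (by linarith),
      phi4_inner _ (1 - f) (by rw [abs_of_nonpos] <;> linarith) (by linarith),
      phi4_outer _ (2 - f) (by rw [abs_of_nonpos] <;> linarith) (by linarith) (by linarith)]
    rw [show -7 + 12 * (1 + f) - 4 * (1 + f) ^ 2 = 1 + 4 * f - 4 * f ^ 2 by ring,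
      show 1 + 4 * (1 - f) - 4 * (1 - f) ^ 2 = 1 + 4 * f - 4 * f ^ 2 by ring,
      show -7 + 12 * (2 - f) - 4 * (2 - f) ^ 2 = 1 + 4 * f - 4 * f ^ 2 by ring]
    have hs := Real.sq_sqrt (show 0 ≤ 1 + 4 * f - 4 * f ^ 2 by nlinarith)
    linear_combination (1 / 16) * hs
  · intro k hk
    simp only [Finset.mem_insert, Finset.mem_singleton, not_or] at hk
    simp only [Equiv.coe_addLeft]
    push_cast
    rw [phi4_zero _ ?_]
    · norm_num
    · rw [le_abs]
      rcases (by omega : k ≤ -2 ∨ 3 ≤ k) with h | h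
      · left
        have : (k : ℝ) ≤ -2 := by exact_mod_cast h
        linarith
      · right
        have : (3 : ℝ) ≤ k := by exact_mod_cast h
        linarith

end
end

section
/- The standard 4-point IB kernel satisfies the even–odd condition: for every x ∈ ℝ, ∑_{j∈ℤ, j even} φ₄(x − j) = 1/2 and ∑_{j∈ℤ, j odd} φ₄(x − j) = 1/2. -/
noncomputable section

theorem phi4_pair (r : ℝ) (h0 : 0 ≤ r) (h2 : r < 2) : phi4 r + phi4 (r - 2) = 1 / 2 := by
  have e1 : |r| = r := abs_of_nonneg h0
  have e2 : |r - 2| = 2 - r := by rw [abs_of_neg (by linarith)]; ring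
  unfold phi4
  rw [e1, e2]
  rcases lt_trichotomy r 1 with h | h | h
  · rw [if_pos h.le, if_neg (by linarith)]
    by_cases hr : r = 0
    · subst hr
      norm_num
    · have : 0 < r := lt_of_le_of_ne h0 (Ne.symm hr)
      rw [if_pos (by linarith),
        show -7 + 12 * (2 - r) - 4 * (r - 2) ^ 2 = 1 + 4 * r - 4 * r ^ 2 by ring]
      ring
  · subst h
    norm_num
  · rw [if_neg (by linarith), if_pos h2, if_pos (by linarith),
      show 1 + 4 * (2 - r) - 4 * (r - 2) ^ 2 = -7 + 12 * r - 4 * r ^ 2 by ring]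
    ring

theorem phi4_sum (x : ℝ) (p : ℤ) (P : ℤ → Prop) [DecidablePred P]
    (hP : ∀ j, P j ↔ ∃ m, j = 2 * m + p) :
    (∑' j : ℤ, if P j then phi4 (x - j) else 0) = 1 / 2 := by
  obtain ⟨k, hk⟩ : ∃ k : ℤ, k = ⌊(x - p) / 2⌋ := ⟨_, rfl⟩
  have h1 : (k : ℝ) ≤ (x - p) / 2 := hk ▸ Int.floor_le _
  have h2 : (x - p) / 2 < k + 1 := hk ▸ Int.lt_floor_add_one _
  rw [tsum_eq_sum (s := {2 * k + p, 2 * (k + 1) + p})]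
  · rw [Finset.sum_pair (by omega), if_pos ((hP _).2 ⟨_, rfl⟩), if_pos ((hP _).2 ⟨_, rfl⟩)]
    have := phi4_pair (x - (2 * k + p)) (by linarith) (by linarith)
    push_cast
    rw [← this]
    congr 2
    ring
  · intro j hj
    split_ifs with h
    · obtain ⟨m, rfl⟩ := (hP _).1 h
      simp only [Finset.mem_insert, Finset.mem_singleton, not_or] at hj
      apply phi4_zero
      push_cast
      rcases (by omega : m ≤ k - 1 ∨ k + 2 ≤ m) with hm | hm
      · have : (m : ℝ) ≤ k - 1 := by exact_mod_cast hm
        exact le_trans (by linarith) (le_abs_self _)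
      · have : (k : ℝ) + 2 ≤ m := by exact_mod_cast hm
        exact le_trans (by linarith) (neg_le_abs _)
    · rfl

/-- The standard 4-point kernel satisfies the even–odd condition: the sums over even
and over odd `j` of `φ₄(x − j)` are each `1/2`. -/
theorem phi4_even_odd (x : ℝ) :
    (∑' j : ℤ, if Even j then phi4 (x - j) else 0) = 1 / 2 ∧
    (∑' j : ℤ, if Odd j then phi4 (x - j) else 0) = 1 / 2 := by
  refine ⟨phi4_sum x 0 _ fun j => ?_, phi4_sum x 1 _ fun j => ?_⟩
  · rw [even_iff_exists_two_mul]
    simp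
  · rfl

end
end

section
/- The standard 3-point IB kernel satisfies the zeroth moment, first moment, and sum-of-squares conditions: for every x ∈ ℝ, ∑_{j∈ℤ} φ₃(x − j) = 1, ∑_{j∈ℤ} (x − j)·φ₃(x − j) = 0, and ∑_{j∈ℤ} φ₃(x − j)² = 1/2. -/
noncomputable section

/-- The standard 3-point immersed-boundary kernel. -/
def phi3 (r : ℝ) : ℝ :=
  if |r| ≤ 1 / 2 then (1 + Real.sqrt (1 - 3 * r ^ 2)) / 3
  else if |r| < 3 / 2 then (5 - 3 * |r| - Real.sqrt (1 - 3 * (1 - |r|) ^ 2)) / 6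
  else 0

lemma phi3_center (r : ℝ) (h1 : -(1/2) ≤ r) (h2 : r < 1/2) :
    phi3 r = (1 + Real.sqrt (1 - 3 * r ^ 2)) / 3 := by
  unfold phi3
  rw [if_pos (abs_le.2 ⟨h1, h2.le⟩)]

lemma sqrt_quarter : Real.sqrt (1 - 3 * (1/2 : ℝ) ^ 2) = 1 / 2 := by
  rw [show (1 - 3 * (1/2 : ℝ) ^ 2) = (1/2) ^ 2 by norm_num]
  exact Real.sqrt_sq (by norm_num)

lemma phi3_left (r : ℝ) (h1 : -(1/2) ≤ r) (h2 : r < 1/2) :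
    phi3 (r - 1) = (2 + 3 * r - Real.sqrt (1 - 3 * r ^ 2)) / 6 := by
  have ha : |r - 1| = 1 - r := by rw [abs_of_neg (by linarith)]; ring
  unfold phi3
  rw [ha, if_neg (by linarith)]
  rcases eq_or_lt_of_le h1 with h | h
  · rw [if_neg (by linarith), ← h, show (-(1/2 : ℝ)) ^ 2 = (1/2) ^ 2 by norm_num, sqrt_quarter]
    norm_num
  · rw [if_pos (by linarith), show 1 - (1 - r) = r by ring]
    ring

lemma phi3_right (r : ℝ) (h1 : -(1/2) ≤ r) (h2 : r < 1/2) :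
    phi3 (r + 1) = (2 - 3 * r - Real.sqrt (1 - 3 * r ^ 2)) / 6 := by
  have ha : |r + 1| = 1 + r := by rw [abs_of_pos (by linarith)]; ring
  unfold phi3
  rw [ha]
  rcases eq_or_lt_of_le h1 with h | h
  · rw [if_pos (by linarith), ← h, show (-(1/2 : ℝ)) ^ 2 = (1/2) ^ 2 by norm_num,
      show (-(1/2 : ℝ)) + 1 = 1/2 by norm_num, sqrt_quarter]
    norm_num
  · rw [if_neg (by linarith), if_pos (by linarith), show 1 - (1 + r) = -r by ring, neg_sq]
    ring

lemma phi3_zero (r : ℝ) (h : 3/2 ≤ |r|) : phi3 r = 0 := by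
  unfold phi3
  rw [if_neg (by linarith), if_neg (by linarith)]

lemma tsum_three (x : ℝ) (n : ℤ) (h1 : -(1/2) ≤ x - n) (h2 : x - n < 1/2) (f : ℝ → ℝ)
    (hf : ∀ y, phi3 y = 0 → f y = 0) :
    ∑' j : ℤ, f (x - j) = f (x - n) + f (x - n - 1) + f (x - n + 1) := by
  rw [tsum_eq_sum (s := {n, n + 1, n - 1})]
  · rw [Finset.sum_insert (by simp; omega), Finset.sum_insert (by simp; omega),
      Finset.sum_singleton]
    push_cast
    rw [show x - ((n : ℝ) + 1) = x - n - 1 by ring, show x - ((n : ℝ) - 1) = x - n + 1 by ring]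
    ring
  · intro j hj
    simp only [Finset.mem_insert, Finset.mem_singleton, not_or] at hj
    apply hf
    apply phi3_zero
    rcases (by omega : n + 2 ≤ j ∨ j ≤ n - 2) with h | h
    · have : (n : ℝ) + 2 ≤ j := by exact_mod_cast h
      rw [le_abs]; right; linarith
    · have : (j : ℝ) ≤ n - 2 := by exact_mod_cast h
      rw [le_abs]; left; linarith

/-- The standard 3-point kernel satisfies the zeroth moment, first moment, and
sum-of-squares (with constant `1/2`) conditions. -/
theorem phi3_moments_and_sum_of_squares (x : ℝ) :
    (∑' j : ℤ, phi3 (x - j)) = 1 ∧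
    (∑' j : ℤ, (x - j) * phi3 (x - j)) = 0 ∧
    (∑' j : ℤ, (phi3 (x - j)) ^ 2) = 1 / 2 := by
  obtain ⟨n, h1, h2⟩ : ∃ n : ℤ, -(1/2) ≤ x - n ∧ x - n < 1/2 := by
    refine ⟨⌊x + 1/2⌋, ?_, ?_⟩
    · linarith [Int.floor_le (x + 1/2)]
    · linarith [Int.lt_floor_add_one (x + 1/2)]
  have hs : Real.sqrt (1 - 3 * (x - n) ^ 2) ^ 2 = 1 - 3 * (x - n) ^ 2 :=
    Real.sq_sqrt (by nlinarith)
  refine ⟨?_, ?_, ?_⟩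
  · rw [tsum_three x n h1 h2 phi3 (fun _ h => h), phi3_center _ h1 h2, phi3_left _ h1 h2,
      phi3_right _ h1 h2]
    ring
  · rw [tsum_three x n h1 h2 (fun y => y * phi3 y) (fun y h => by simp [h])]
    rw [phi3_center _ h1 h2, phi3_left _ h1 h2, phi3_right _ h1 h2]
    ring
  · rw [tsum_three x n h1 h2 (fun y => phi3 y ^ 2) (fun y h => by simp [h])]
    rw [phi3_center _ h1 h2, phi3_left _ h1 h2, phi3_right _ h1 h2]
    linear_combination (1/6) * hs

end
end
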